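/- Let A be a unital algebra over a commutative ℚ-algebra k with k → A split. Then i² = 0 and d∘i + i∘d = 0, where i : DR^•A → Ω^{•−1}A is the contraction map defined by i(a₀ da₁⋯da_n)_♮ = Σ_{ℓ=1}^n (−1)^{(ℓ−1)(n−1)+1}[a_ℓ, da_{ℓ+1}⋯da_n a₀ da₁⋯da_{ℓ−1}] and d is the Karoubi-de Rham differential. -/

import Mathlib

/-!
A form `a₀ da₁ ⋯ daₙ` is contracted by recursion on `a₁, …, aₙ`, with `a₀` replaced by an arbitrary
`y` that collects the factors `da₁, da₂, …` already passed over.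

* The Leibniz rule `d(ca) = (dc) a + c (da)` shows that `i` is still given by the cyclic formula
  when one further factor `a ∈ A` stands between the `daⱼ`. Moving `a` to the far right gives
  `i (x a) = i (a x)`. Since `i x` is a sum of commutators with elements of `A`, `i² = 0`.
* For `n`-forms, `d[a, ω] = da ω - (-1)ⁿ⁻¹ ω da + [a, dω]`. Summed with the signs of `i`, the first
  two terms telescope to `[a₀, da₁ ⋯ daₙ]`, and this with the last ones is `-i (da₀ da₁ ⋯ daₙ)`.
-/

section CyclicContraction

variable {A Ω : Type*} [Ring Ω]

/-- The contraction `-∑ⱼ sʲ⁻¹ [f aⱼ, g aⱼ₊₁ ⋯ g aₙ y g a₁ ⋯ g aⱼ₋₁]` of the list `a₁, …, aₙ`.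
For `f` the inclusion `A → Ω`, `g = d ∘ f`, `y = a₀` and `s = (-1)ⁿ⁻¹` it is the formula for
`i (a₀ da₁ ⋯ daₙ)`. -/
def cyclicContraction (f g : A → Ω) (s : ℤ) : List A → Ω → Ω
  | [], _ => 0
  | a :: l, y => s • cyclicContraction f g s l (y * g a) - ⁅f a, (l.map g).prod * y⁆

/-- `i` is given on the standard forms `a₀ da₁ ⋯ daₙ` by the cyclic formula, where `f` is the
inclusion and `g = d ∘ f`. The sign `(-1)ⁿ⁻¹` is written `(-1)ⁿ⁺¹` to avoid truncated
subtraction. -/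
def IsContraction (f g : A → Ω) (i : Ω → Ω) : Prop :=
  ∀ b l, i (f b * (l.map g).prod) = cyclicContraction f g ((-1) ^ (l.length + 1)) l (f b)

variable (f g : A → Ω) (s : ℤ)

theorem cyclicContraction_add (l : List A) (x y : Ω) :
    cyclicContraction f g s l (x + y) =
      cyclicContraction f g s l x + cyclicContraction f g s l y := by
  induction l generalizing x y with
  | nil => simp [cyclicContraction]
  | cons a l ih =>
    simp only [cyclicContraction, Ring.lie_def, add_mul, mul_add, ih, smul_add]
    abel

theorem cyclicContraction_append (l r : List A) (y : Ω) :
    cyclicContraction f g s (l ++ r) y =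
      cyclicContraction f g s l ((r.map g).prod * y) +
        s ^ l.length • cyclicContraction f g s r (y * (l.map g).prod) := by
  induction l generalizing y with
  | nil => simp [cyclicContraction]
  | cons a l ih =>
    simp only [cyclicContraction, List.cons_append, ih, List.map_append, List.prod_append,
      List.map_cons, List.prod_cons, List.length_cons, mul_assoc, smul_add, smul_smul, pow_succ']
    abel

theorem cyclicContraction_eq_sum (l : List A) (y : Ω) :
    cyclicContraction f g s l y = ∑ j : Fin l.length, (-s ^ (j : ℕ)) •
      ⁅f l[j], ((l.drop (j + 1)).map g).prod * y * ((l.take j).map g).prod⁆ := by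
  induction l generalizing y with
  | nil => simp [cyclicContraction]
  | cons a l ih =>
    simp [cyclicContraction, ih, Fin.sum_univ_succ, Finset.smul_sum, pow_succ', mul_assoc,
      sub_eq_add_neg, add_comm]

theorem map_cyclicContraction_eq_zero {F : Type*} [FunLike F Ω Ω] [AddMonoidHomClass F Ω Ω]
    {i : F} (hi : ∀ a x, i ⁅f a, x⁆ = 0) (l : List A) (y : Ω) :
    i (cyclicContraction f g s l y) = 0 := by
  induction l generalizing y with
  | nil => exact map_zero i
  | cons a l ih => rw [cyclicContraction, map_sub, map_zsmul, ih, hi, smul_zero, sub_zero]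

variable {f g}

theorem neg_one_pow_mul_sub_one_add_one {j n : ℕ} (hj : j < n) :
    (-1 : ℤ) ^ (j * (n - 1) + 1) = -((-1) ^ (n + 1)) ^ j := by
  obtain ⟨m, rfl⟩ : ∃ m, n = m + 1 := ⟨n - 1, by omega⟩
  simp [← pow_mul, pow_succ, mul_comm]

theorem isContraction_of_sum_formula {i : Ω → Ω}
    (hi : ∀ (n : ℕ) (a : ℕ → A),
      i (f (a 0) * (List.ofFn fun i : Fin n => g (a (i.1 + 1))).prod) =
        ∑ l ∈ Finset.Icc 1 n, ((-1 : ℤ) ^ ((l - 1) * (n - 1) + 1)) •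
          ⁅f (a l), (List.ofFn fun i : Fin (n - l) => g (a (l + 1 + i.1))).prod * f (a 0) *
            (List.ofFn fun i : Fin (l - 1) => g (a (1 + i.1))).prod⁆) :
    IsContraction f g i := by
  intro b l
  let a (j : ℕ) : A := (b :: l).getD j b
  have ha {j : ℕ} (hj : j < l.length) : a (j + 1) = l[j] := by simp [a, hj]
  have hmap : (List.ofFn fun i : Fin l.length => g (a (i.1 + 1))) = l.map g :=
    List.ext_getElem (by simp) fun j hj _ => by
      simp [ha (show j < l.length by simpa using hj)]
  have hdrop (j : ℕ) : (List.ofFn fun i : Fin (l.length - (1 + j)) => g (a (1 + j + 1 + i.1))) =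
      (l.drop (j + 1)).map g :=
    List.ext_getElem (by simp [add_comm]) fun m hm _ => by
      have hlt : j + 1 + m < l.length := by simp at hm; omega
      simp [← ha hlt, show 1 + j + 1 + m = j + 1 + m + 1 by omega]
  have htake {j : ℕ} (hj : j < l.length) : (List.ofFn fun i : Fin j => g (a (1 + i.1))) =
      (l.take j).map g :=
    List.ext_getElem (by simp [hj.le]) fun m hm _ => by
      have hlt : m < l.length := by simp at hm; omega
      simp [← ha hlt, add_comm]
  have hsum := hi l.length a
  rw [hmap, ← Finset.Ico_add_one_right_eq_Icc, Finset.sum_Ico_eq_sum_range, Nat.add_sub_cancel,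
    Finset.sum_range] at hsum
  rw [cyclicContraction_eq_sum]
  refine hsum.trans (Finset.sum_congr rfl fun j _ => ?_)
  rw [Nat.add_sub_cancel_left, neg_one_pow_mul_sub_one_add_one j.isLt, hdrop, htake j.isLt,
    add_comm 1, ha j.isLt]
  rfl

end CyclicContraction

namespace IsContraction

variable {A Ω F E : Type*} [Monoid A] [Ring Ω] [FunLike F A Ω] [MonoidHomClass F A Ω]
  [FunLike E Ω Ω] [AddMonoidHomClass E Ω Ω] {f : F} {g : A → Ω} {i : E}

/- Induction on `l` from the right: `(dc) a = d(ca) - c (da)` moves `a` one step to the left. -/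
theorem map_mul_prod_mul_mul_prod (hi : IsContraction f g i)
    (hg : ∀ a b, g (a * b) = g a * f b + f a * g b) {s : ℤ} (b a : A) (l r : List A)
    (hs : s = (-1) ^ (l.length + r.length + 1)) :
    i (f b * (l.map g).prod * f a * (r.map g).prod) =
      cyclicContraction f g s l (f a * (r.map g).prod * f b) +
        s ^ l.length • cyclicContraction f g s r (f b * (l.map g).prod * f a) := by
  induction l using List.reverseRecOn generalizing a r with
  | nil => simpa [cyclicContraction, hs] using hi (b * a) r
  | append_singleton l c ih =>
    have hshift := ih c (a :: r) (by
      rw [hs, List.length_append, List.length_singleton, List.length_cons]; ring)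
    have hmerge := hi b (l ++ (c * a) :: r)
    rw [show (l ++ (c * a) :: r).length = (l ++ [c]).length + r.length by simp; omega, ← hs]
      at hmerge
    have hform : f b * ((l ++ [c]).map g).prod * f a * (r.map g).prod =
        f b * ((l ++ (c * a) :: r).map g).prod -
          f b * (l.map g).prod * f c * ((a :: r).map g).prod := by
      simp [hg, mul_add, add_mul, mul_assoc]
    have hlie (x : Ω) : ⁅f (c * a), x⁆ = ⁅f c, f a * x⁆ + ⁅f a, x * f c⁆ := by
      simp only [Ring.lie_def, map_mul, mul_assoc]
      abel
    rw [hform, map_sub, hmerge, hshift]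
    simp only [cyclicContraction_append, cyclicContraction, hg, hlie, mul_add, add_mul,
      cyclicContraction_add, smul_add, smul_sub, smul_zero, smul_smul, mul_assoc, List.map_cons,
      List.map_nil, List.prod_cons, List.prod_nil, List.map_append, List.prod_append,
      List.length_append, List.length_cons, List.length_nil, pow_succ, mul_one, one_mul]
    abel

theorem map_lie_mul_prod_eq_zero (hi : IsContraction f g i)
    (hg : ∀ a b, g (a * b) = g a * f b + f a * g b) (a b : A) (l : List A) :
    i ⁅f a, f b * (l.map g).prod⁆ = 0 := by
  have hleft : i (f a * (f b * (l.map g).prod)) =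
      cyclicContraction f g ((-1) ^ (l.length + 1)) l (f a * f b) := by
    rw [← mul_assoc, ← map_mul, hi]
  have hright : i (f b * (l.map g).prod * f a) =
      cyclicContraction f g ((-1) ^ (l.length + 1)) l (f a * f b) := by
    simpa [cyclicContraction] using hi.map_mul_prod_mul_mul_prod hg b a l [] rfl
  rw [Ring.lie_def, map_sub, hleft, hright, sub_self]

variable {k : Type*} [CommRing k] [Algebra k Ω] {i : Ω →ₗ[k] Ω}

theorem map_lie_eq_zero (hi : IsContraction f g i) (hg : ∀ a b, g (a * b) = g a * f b + f a * g b)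
    (hspan : Submodule.span k (Set.range fun w : A × List A => f w.1 * (w.2.map g).prod) = ⊤)
    (a : A) (x : Ω) : i ⁅f a, x⁆ = 0 := by
  have hzero : i ∘ₗ (LinearMap.mulLeft k (f a) - LinearMap.mulRight k (f a)) = 0 :=
    LinearMap.ext_on_range hspan fun w => hi.map_lie_mul_prod_eq_zero hg a w.1 w.2
  exact LinearMap.congr_fun hzero x

theorem map_map_eq_zero (hi : IsContraction f g i) (hg : ∀ a b, g (a * b) = g a * f b + f a * g b)
    (hspan : Submodule.span k (Set.range fun w : A × List A => f w.1 * (w.2.map g).prod) = ⊤)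
    (x : Ω) : i (i x) = 0 := by
  have hzero : i ∘ₗ i = 0 := LinearMap.ext_on_range hspan fun w => by
    rw [LinearMap.comp_apply, hi, map_cyclicContraction_eq_zero f g _ (hi.map_lie_eq_zero hg hspan),
      LinearMap.zero_apply]
  exact LinearMap.congr_fun hzero x

end IsContraction

/-- `d` is a differential for the pieces `G n` of degree `n`: a square-zero map of degree one
satisfying the graded Leibniz rule, as in a differential graded algebra (the sum of the `G n` is
not required to be direct). -/
structure IsGradedDifferential {k Ω : Type*} [CommRing k] [Ring Ω] [Algebra k Ω]
    (G : ℕ → Submodule k Ω) (d : Ω →ₗ[k] Ω) : Prop where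
  map_mem {n : ℕ} {x : Ω} : x ∈ G n → d x ∈ G (n + 1)
  map_map_eq_zero (x : Ω) : d (d x) = 0
  leibniz {m : ℕ} {x : Ω} (hx : x ∈ G m) (y : Ω) :
    d (x * y) = d x * y + ((-1 : ℤ) ^ m) • (x * d y)

namespace IsGradedDifferential

variable {k A Ω : Type*} [CommRing k] [Ring Ω] [Algebra k Ω] {G : ℕ → Submodule k Ω}
  {d : Ω →ₗ[k] Ω}

theorem leibniz_zero (hd : IsGradedDifferential G d) {x : Ω} (hx : x ∈ G 0) (y : Ω) :
    d (x * y) = d x * y + x * d y := by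
  simpa using hd.leibniz hx y

theorem map_lie (hd : IsGradedDifferential G d) {m : ℕ} {a x : Ω} (ha : a ∈ G 0) (hx : x ∈ G m) :
    d ⁅a, x⁆ = d a * x - ((-1 : ℤ) ^ m) • (x * d a) + ⁅a, d x⁆ := by
  rw [Ring.lie_def, map_sub, hd.leibniz_zero ha, hd.leibniz hx, Ring.lie_def]
  abel

variable [SetLike.GradedMonoid G]

theorem map_one_eq_zero (hd : IsGradedDifferential G d) : d 1 = 0 := by
  simpa using hd.leibniz_zero (SetLike.one_mem_graded G) 1

variable {f : A → Ω}

theorem prod_mem (hd : IsGradedDifferential G d) (hf : ∀ a, f a ∈ G 0) (l : List A) :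
    (l.map (d ∘ f)).prod ∈ G l.length := by
  have hmem := SetLike.list_prod_map_mem_graded l (fun _ => 0 + 1) (d ∘ f)
    fun a _ => hd.map_mem (hf a)
  simpa using hmem

theorem map_prod_eq_zero (hd : IsGradedDifferential G d) (hf : ∀ a, f a ∈ G 0) (l : List A) :
    d (l.map (d ∘ f)).prod = 0 := by
  induction l with
  | nil => exact hd.map_one_eq_zero
  | cons a l ih => simp [hd.leibniz (hd.map_mem (hf a)), hd.map_map_eq_zero, ih]

theorem map_mul_prod (hd : IsGradedDifferential G d) (hf : ∀ a, f a ∈ G 0) {q : ℕ} {y : Ω}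
    (hy : y ∈ G q) (l : List A) : d (y * (l.map (d ∘ f)).prod) = d y * (l.map (d ∘ f)).prod := by
  rw [hd.leibniz hy, hd.map_prod_eq_zero hf, mul_zero, smul_zero, add_zero]

theorem map_cyclicContraction (hd : IsGradedDifferential G d) (hf : ∀ a, f a ∈ G 0) {q : ℕ}
    {y : Ω} (hy : y ∈ G q) {s : ℤ} (l : List A) (hs : s = (-1) ^ (q + l.length + 1)) :
    d (cyclicContraction f (d ∘ f) s l y) =
      s ^ l.length • (y * (l.map (d ∘ f)).prod) - (l.map (d ∘ f)).prod * y -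
        ((-1 : ℤ) ^ l.length) • cyclicContraction f (d ∘ f) (-s) l (d y) := by
  induction l generalizing q y with
  | nil => simp [cyclicContraction]
  | cons a l ih =>
    have hda : d (f a) ∈ G 1 := hd.map_mem (hf a)
    have hrec := ih (SetLike.mul_mem_graded hy hda) (by rw [hs, List.length_cons]; ring)
    have hyda : d (y * d (f a)) = d y * d (f a) := by
      rw [hd.leibniz hy, hd.map_map_eq_zero, mul_zero, smul_zero, add_zero]
    have hprod : d ((l.map (d ∘ f)).prod * y) =
        ((-1 : ℤ) ^ l.length) • ((l.map (d ∘ f)).prod * d y) := by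
      rw [hd.leibniz (hd.prod_mem hf l), hd.map_prod_eq_zero hf, zero_mul, zero_add]
    have hlie : d ⁅f a, (l.map (d ∘ f)).prod * y⁆ =
        d (f a) * ((l.map (d ∘ f)).prod * y) - s • ((l.map (d ∘ f)).prod * y * d (f a)) +
          ((-1 : ℤ) ^ l.length) • ⁅f a, (l.map (d ∘ f)).prod * d y⁆ := by
      rw [hd.map_lie (hf a) (SetLike.mul_mem_graded (hd.prod_mem hf l) hy), hprod, hs,
        List.length_cons, Ring.lie_def, Ring.lie_def, mul_smul_comm, smul_mul_assoc, smul_sub,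
        show (-1 : ℤ) ^ (q + (l.length + 1) + 1) = (-1) ^ (l.length + q) by ring]
    simp only [cyclicContraction, map_sub, map_zsmul, Function.comp_apply, hrec, hyda, hlie,
      List.map_cons, List.prod_cons, List.length_cons, smul_sub, smul_neg, smul_smul, mul_assoc,
      pow_succ', neg_smul, neg_mul, one_mul, neg_neg]
    rw [mul_comm s ((-1) ^ l.length)]
    abel

end IsGradedDifferential

namespace IsContraction

variable {k A Ω F : Type*} [CommRing k] [Monoid A] [Ring Ω] [Algebra k Ω] [FunLike F A Ω]
  [MonoidHomClass F A Ω] {f : F} {d i : Ω →ₗ[k] Ω} {G : ℕ → Submodule k Ω}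
  [SetLike.GradedMonoid G]

theorem differential_map_add_map_differential_mul_prod (hi : IsContraction f (d ∘ f) i)
    (hd : IsGradedDifferential G d) (hf : ∀ a, f a ∈ G 0) (b : A) (l : List A) :
    d (i (f b * (l.map (d ∘ f)).prod)) + i (d (f b * (l.map (d ∘ f)).prod)) = 0 := by
  have hdi := hd.map_cyclicContraction hf (hf b) l rfl
  have hid : i (d (f b * (l.map (d ∘ f)).prod)) =
      (-1 : ℤ) ^ l.length • cyclicContraction f (d ∘ f) ((-1) ^ l.length) l (d (f b)) -
        ⁅f b, (l.map (d ∘ f)).prod⁆ := by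
    rw [hd.map_mul_prod hf (hf b)]
    simpa [cyclicContraction, pow_succ] using hi 1 (b :: l)
  have hsign : ((-1 : ℤ) ^ (l.length + 1)) ^ l.length = 1 := by
    rw [← pow_mul, mul_comm]
    exact (Nat.even_mul_succ_self _).neg_one_pow
  rw [zero_add, hsign, one_smul, show -(-1 : ℤ) ^ (l.length + 1) = (-1) ^ l.length by ring] at hdi
  rw [hi, hdi, hid, Ring.lie_def]
  abel

theorem differential_map_add_map_differential (hi : IsContraction f (d ∘ f) i)
    (hd : IsGradedDifferential G d) (hf : ∀ a, f a ∈ G 0)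
    (hspan : Submodule.span k (Set.range fun w : A × List A => f w.1 * (w.2.map (d ∘ f)).prod) = ⊤)
    (x : Ω) : d (i x) + i (d x) = 0 := by
  have hzero : d ∘ₗ i + i ∘ₗ d = 0 := LinearMap.ext_on_range hspan fun w =>
    hi.differential_map_add_map_differential_mul_prod hd hf w.1 w.2
  exact LinearMap.congr_fun hzero x

end IsContraction

theorem stmt_11_general {k A Ω : Type*} [CommRing k]
    [Ring A] [Algebra k A] [Ring Ω] [Algebra k Ω]
    (ι : A →ₐ[k] Ω) (d : Ω →ₗ[k] Ω) (G : ℕ → Submodule k Ω)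
    (hG0 : G 0 = LinearMap.range ι.toLinearMap)
    (hGmul : ∀ m n : ℕ, ∀ x ∈ G m, ∀ y ∈ G n, x * y ∈ G (m + n))
    (hdG : ∀ n : ℕ, ∀ x ∈ G n, d x ∈ G (n + 1))
    (hdd : ∀ x : Ω, d (d x) = 0)
    (hleib : ∀ (m : ℕ) (x : Ω), x ∈ G m → ∀ y : Ω,
      d (x * y) = d x * y + ((-1 : ℤ) ^ m) • (x * d y))
    (hspan : ∀ n : ℕ, G n = Submodule.span k
      {w : Ω | ∃ a : ℕ → A,
        w = ι (a 0) * (List.ofFn fun i : Fin n => d (ι (a (i.1 + 1)))).prod})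
    (hsup : (⨆ n, G n) = ⊤)
    (iOp : Ω →ₗ[k] Ω)
    (hi : ∀ (n : ℕ) (a : ℕ → A),
      iOp (ι (a 0) * (List.ofFn fun i : Fin n => d (ι (a (i.1 + 1)))).prod)
        = ∑ l ∈ Finset.Icc 1 n, ((-1 : ℤ) ^ ((l - 1) * (n - 1) + 1)) •
            (ι (a l) *
               ((List.ofFn fun i : Fin (n - l) => d (ι (a (l + 1 + i.1)))).prod *
                 ι (a 0) *
                 (List.ofFn fun i : Fin (l - 1) => d (ι (a (1 + i.1)))).prod)
             - ((List.ofFn fun i : Fin (n - l) => d (ι (a (l + 1 + i.1)))).prod *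
                 ι (a 0) *
                 (List.ofFn fun i : Fin (l - 1) => d (ι (a (1 + i.1)))).prod) *
               ι (a l))) :
    (∀ x : Ω, iOp (iOp x) = 0) ∧ (∀ x : Ω, d (iOp x) + iOp (d x) = 0) := by
  have hι (a : A) : ι a ∈ G 0 := hG0 ▸ ⟨a, rfl⟩
  have hone : 1 ∈ G 0 := by simpa using hι 1
  have : SetLike.GradedMonoid G := {
    one_mem := hone
    mul_mem := fun _ _ _ _ hx hy => hGmul _ _ _ hx _ hy }
  have hd : IsGradedDifferential G d := ⟨hdG _ _, hdd, hleib _ _⟩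
  have hdmul (a b : A) : (d ∘ ι) (a * b) = (d ∘ ι) a * ι b + ι a * (d ∘ ι) b := by
    simpa using hd.leibniz_zero (hι a) (ι b)
  have htop : Submodule.span k
      (Set.range fun w : A × List A => ι w.1 * (w.2.map (d ∘ ι)).prod) = ⊤ := by
    rw [eq_top_iff, ← hsup]
    refine iSup_le fun n => (hspan n).trans_le (Submodule.span_mono ?_)
    rintro _ ⟨a, rfl⟩
    exact ⟨(a 0, List.ofFn fun i : Fin n => a (i + 1)), by simp [List.map_ofFn, Function.comp_def]⟩
  have hcontr : IsContraction ι (d ∘ ι) iOp := isContraction_of_sum_formula hi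
  exact ⟨hcontr.map_map_eq_zero hdmul htop, hcontr.differential_map_add_map_differential hd hι htop⟩

/-- the contraction map `i` (defined on standard forms by the explicit
formula of [CBEG]) satisfies `i² = 0` and `d∘i + i∘d = 0`, where `d` is the
Karoubi-de Rham differential on the differential envelope `Ω A` (as an identity of
maps `DR A → Ω A`, i.e. as stated on `Ω A` for the formula-defined operator, which
kills commutators). -/
theorem stmt_11 {k A Ω : Type} [CommRing k] [Algebra ℚ k]
    [Ring A] [Algebra k A] [Ring Ω] [Algebra k Ω]
    (ι : A →ₐ[k] Ω) (d : Ω →ₗ[k] Ω) (G : ℕ → Submodule k Ω)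
    (hsplit : ∃ p : A →ₗ[k] k, ∀ c : k, p (algebraMap k A c) = c)
    (hG0 : G 0 = LinearMap.range ι.toLinearMap)
    (hGmul : ∀ m n : ℕ, ∀ x ∈ G m, ∀ y ∈ G n, x * y ∈ G (m + n))
    (hdG : ∀ n : ℕ, ∀ x ∈ G n, d x ∈ G (n + 1))
    (hdd : ∀ x : Ω, d (d x) = 0)
    (hleib : ∀ (m : ℕ) (x : Ω), x ∈ G m → ∀ y : Ω,
      d (x * y) = d x * y + ((-1 : ℤ) ^ m) • (x * d y))
    (hspan : ∀ n : ℕ, G n = Submodule.span k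
      {w : Ω | ∃ a : ℕ → A,
        w = ι (a 0) * (List.ofFn fun i : Fin n => d (ι (a (i.1 + 1)))).prod})
    (hsup : (⨆ n, G n) = ⊤)
    (iOp : Ω →ₗ[k] Ω)
    (hi0 : ∀ a : A, iOp (ι a) = 0)
    (hi : ∀ (n : ℕ) (a : ℕ → A),
      iOp (ι (a 0) * (List.ofFn fun i : Fin n => d (ι (a (i.1 + 1)))).prod)
        = ∑ l ∈ Finset.Icc 1 n, ((-1 : ℤ) ^ ((l - 1) * (n - 1) + 1)) •
            (ι (a l) *
               ((List.ofFn fun i : Fin (n - l) => d (ι (a (l + 1 + i.1)))).prod *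
                 ι (a 0) *
                 (List.ofFn fun i : Fin (l - 1) => d (ι (a (1 + i.1)))).prod)
             - ((List.ofFn fun i : Fin (n - l) => d (ι (a (l + 1 + i.1)))).prod *
                 ι (a 0) *
                 (List.ofFn fun i : Fin (l - 1) => d (ι (a (1 + i.1)))).prod) *
               ι (a l))) :
    (∀ x : Ω, iOp (iOp x) = 0) ∧ (∀ x : Ω, d (iOp x) + iOp (d x) = 0) :=
  stmt_11_general ι d G hG0 hGmul hdG hdd hleib hspan hsup iOp hi
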